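/- arXiv:2107.10488 — 3 statements merged into one kernel-verified Lean document; each statement's English description precedes it below -/
import Mathlib

section
/- (Alon–Chung lemma for weighted graphs.) Let (V,E) be a connected finite weighted graph with weight function m, and let λ be such that ⟨Mφ,φ⟩ ≤ λ·‖φ‖² for every φ ∈ ℓ²(V) orthogonal to the constant function (in particular this holds when λ is the second largest eigenvalue of the random walk operator M). Then for every nonempty proper subset U ⊊ V, m(U)·(λ + (1−λ)·m(U)/m(V)) ≥ m(U,U). -/
open Finset

noncomputable section
open scoped Classical

/-- Sum of edge weights between two vertex sets (over ordered pairs),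
i.e. `m(U₁,U₂)` for a weighted graph given by the symmetric kernel `m`. -/
def pairW {α : Type*} (m : α → α → ℝ) (U₁ U₂ : Finset α) : ℝ :=
  ∑ u ∈ U₁, ∑ v ∈ U₂, m u v

/-- Weighted degree `m(v)` of a vertex, relative to the vertex set `vs` of the graph. -/
def degOn {α : Type*} (m : α → α → ℝ) (vs : Finset α) (v : α) : ℝ :=
  ∑ u ∈ vs, m v u

/-- Weight `m(U)` of a set of vertices. -/
def vertOn {α : Type*} (m : α → α → ℝ) (vs : Finset α) (U : Finset α) : ℝ :=
  ∑ v ∈ U, degOn m vs v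

/-- The (generalized) Cheeger constant
`h = min over nonempty proper U ⊆ vs of m(U, vs∖U)·m(vs)/(m(U)·m(vs∖U))`. -/
def cheegerOn {α : Type*} (m : α → α → ℝ) (vs : Finset α) : ℝ :=
  sInf { x : ℝ | ∃ U : Finset α, U ⊆ vs ∧ U.Nonempty ∧ U ≠ vs ∧
    x = pairW m U (vs \ U) * vertOn m vs vs / (vertOn m vs U * vertOn m vs (vs \ U)) }

/-- A weighted graph is a `λ`-expander if `1 - h ≤ λ`. -/
def IsExpanderOn {α : Type*} (m : α → α → ℝ) (vs : Finset α) (lam : ℝ) : Prop :=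
  1 - cheegerOn m vs ≤ lam

/-- The ℓ² inner product `⟨φ,ψ⟩ = Σ_v m(v) φ(v) ψ(v)` with respect to the vertex weights. -/
def iprodK {α : Type*} [Fintype α] (m : α → α → ℝ) (φ ψ : α → ℝ) : ℝ :=
  ∑ v, (∑ u, m v u) * (φ v * ψ v)

/-- The random walk operator `Mφ(v) = (1/m(v)) Σ_u m({u,v}) φ(u)`. -/
def walkK {α : Type*} [Fintype α] (m : α → α → ℝ) (φ : α → ℝ) (v : α) : ℝ :=
  (∑ u, m v u * φ u) / (∑ u, m v u)

/-!
Project `φ` onto the complement of the constants: `ψ = φ - (⟨φ, 1⟩ / ⟨1, 1⟩) • 1`. Since `M` is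
self-adjoint and fixes `1`, subtracting the constant part lowers `⟨Mφ, φ⟩` and `⟨φ, φ⟩` by the same
amount `⟨φ, 1⟩² / ⟨1, 1⟩`, so the spectral hypothesis for `ψ` becomes
`⟨Mφ, φ⟩ ≤ λ ⟨φ, φ⟩ + (1 - λ) ⟨φ, 1⟩² / ⟨1, 1⟩`. For the indicator `φ` of `U` the three inner
products are `m(U, U)`, `m(U)` and `m(U)`, while `⟨1, 1⟩ = m(V)`.
-/

section Bilinearity

variable {α : Type*} [Fintype α] (m : α → α → ℝ)

lemma iprodK_comm (φ ψ : α → ℝ) : iprodK m φ ψ = iprodK m ψ φ := by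
  simp only [iprodK, mul_comm (φ _)]

lemma iprodK_sub_left (φ₁ φ₂ ψ : α → ℝ) :
    iprodK m (φ₁ - φ₂) ψ = iprodK m φ₁ ψ - iprodK m φ₂ ψ := by
  simp only [iprodK, Pi.sub_apply, sub_mul, mul_sub, sum_sub_distrib]

lemma iprodK_sub_right (φ ψ₁ ψ₂ : α → ℝ) :
    iprodK m φ (ψ₁ - ψ₂) = iprodK m φ ψ₁ - iprodK m φ ψ₂ := by
  rw [iprodK_comm, iprodK_sub_left, iprodK_comm m ψ₁, iprodK_comm m ψ₂]

lemma iprodK_smul_left (c : ℝ) (φ ψ : α → ℝ) : iprodK m (c • φ) ψ = c * iprodK m φ ψ := by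
  simp only [iprodK, Pi.smul_apply, smul_eq_mul, mul_sum]
  exact sum_congr rfl fun v _ => by ring

lemma iprodK_smul_right (c : ℝ) (φ ψ : α → ℝ) : iprodK m φ (c • ψ) = c * iprodK m φ ψ := by
  rw [iprodK_comm, iprodK_smul_left, iprodK_comm]

lemma walkK_sub (φ ψ : α → ℝ) : walkK m (φ - ψ) = walkK m φ - walkK m ψ := by
  ext v
  simp only [walkK, Pi.sub_apply, mul_sub, sum_sub_distrib, sub_div]

lemma walkK_smul (c : ℝ) (φ : α → ℝ) : walkK m (c • φ) = c • walkK m φ := by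
  ext v
  simp only [walkK, Pi.smul_apply, smul_eq_mul, mul_left_comm _ c, ← mul_sum, mul_div_assoc]

end Bilinearity

section RandomWalk

variable {α : Type*} [Fintype α] {m : α → α → ℝ}

lemma walkK_one (hdeg : ∀ v, degOn m univ v ≠ 0) : walkK m 1 = 1 := by
  ext v
  simpa only [walkK, degOn, Pi.one_apply, mul_one] using div_self (hdeg v)

lemma iprodK_walkK_eq_sum (hdeg : ∀ v, degOn m univ v ≠ 0) (φ ψ : α → ℝ) :
    iprodK m (walkK m φ) ψ = ∑ v, ∑ u, m v u * φ u * ψ v := by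
  refine sum_congr rfl fun v _ => ?_
  rw [walkK, ← mul_assoc, ← degOn, mul_div_cancel₀ _ (hdeg v), sum_mul]

lemma iprodK_walkK_left (hsymm : ∀ u v, m u v = m v u) (hdeg : ∀ v, degOn m univ v ≠ 0)
    (φ ψ : α → ℝ) : iprodK m (walkK m φ) ψ = iprodK m φ (walkK m ψ) := by
  rw [iprodK_comm m φ, iprodK_walkK_eq_sum hdeg, iprodK_walkK_eq_sum hdeg, sum_comm]
  refine sum_congr rfl fun u _ => sum_congr rfl fun v _ => ?_
  rw [hsymm, mul_right_comm]

lemma iprodK_walkK_one (hsymm : ∀ u v, m u v = m v u) (hdeg : ∀ v, degOn m univ v ≠ 0)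
    (φ : α → ℝ) : iprodK m (walkK m φ) 1 = iprodK m φ 1 := by
  rw [iprodK_walkK_left hsymm hdeg, walkK_one hdeg]

end RandomWalk

section Centering

variable {α : Type*} [Fintype α] {m : α → α → ℝ}

/-- The component of `φ` orthogonal to the constant functions in `ℓ²`, provided `⟨1, 1⟩ ≠ 0`
(for `⟨1, 1⟩ = 0` the division makes it `φ` itself). -/
def centered (m : α → α → ℝ) (φ : α → ℝ) : α → ℝ :=
  φ - (iprodK m φ 1 / iprodK m 1 1) • 1

lemma iprodK_centered_one (hone : iprodK m 1 1 ≠ 0) (φ : α → ℝ) :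
    iprodK m (centered m φ) 1 = 0 := by
  rw [centered, iprodK_sub_left, iprodK_smul_left, div_mul_cancel₀ _ hone, sub_self]

lemma iprodK_centered_centered (hone : iprodK m 1 1 ≠ 0) (φ ψ : α → ℝ) :
    iprodK m (centered m φ) (centered m ψ) =
      iprodK m φ ψ - iprodK m φ 1 * iprodK m ψ 1 / iprodK m 1 1 :=
  calc iprodK m (centered m φ) (centered m ψ)
      = iprodK m (centered m φ) ψ := by
        nth_rw 2 [centered]
        rw [iprodK_sub_right, iprodK_smul_right, iprodK_centered_one hone, mul_zero, sub_zero]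
    _ = iprodK m φ ψ - iprodK m φ 1 * iprodK m ψ 1 / iprodK m 1 1 := by
        rw [centered, iprodK_sub_left, iprodK_smul_left, iprodK_comm m 1 ψ, div_mul_eq_mul_div]

lemma walkK_centered (hsymm : ∀ u v, m u v = m v u) (hdeg : ∀ v, degOn m univ v ≠ 0)
    (φ : α → ℝ) : walkK m (centered m φ) = centered m (walkK m φ) := by
  rw [centered, centered, walkK_sub, walkK_smul, walkK_one hdeg, iprodK_walkK_one hsymm hdeg]

theorem iprodK_walkK_self_le (hsymm : ∀ u v, m u v = m v u) (hdeg : ∀ v, degOn m univ v ≠ 0)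
    (hone : iprodK m 1 1 ≠ 0) {lam : ℝ}
    (hspec : ∀ φ : α → ℝ, iprodK m φ 1 = 0 → iprodK m (walkK m φ) φ ≤ lam * iprodK m φ φ)
    (φ : α → ℝ) :
    iprodK m (walkK m φ) φ ≤
      lam * iprodK m φ φ + (1 - lam) * (iprodK m φ 1 * iprodK m φ 1 / iprodK m 1 1) := by
  have hcentered := hspec (centered m φ) (iprodK_centered_one hone φ)
  rw [walkK_centered hsymm hdeg, iprodK_centered_centered hone, iprodK_centered_centered hone,
    iprodK_walkK_one hsymm hdeg] at hcentered
  linarith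

end Centering

section Indicator

variable {α : Type*} [Fintype α] {m : α → α → ℝ}

lemma iprodK_one_one : iprodK m 1 1 = vertOn m univ univ := by
  simp [iprodK, vertOn, degOn]

lemma iprodK_indicator_one (U : Finset α) :
    iprodK m ((U : Set α).indicator 1) 1 = vertOn m univ U := by
  simp [iprodK, vertOn, degOn, Set.indicator_apply]

lemma iprodK_indicator_self (U : Finset α) :
    iprodK m ((U : Set α).indicator 1) ((U : Set α).indicator 1) = vertOn m univ U := by
  simp [iprodK, vertOn, degOn, Set.indicator_apply]

lemma iprodK_walkK_indicator (hdeg : ∀ v, degOn m univ v ≠ 0) (U W : Finset α) :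
    iprodK m (walkK m ((U : Set α).indicator 1)) ((W : Set α).indicator 1) = pairW m W U := by
  simp [iprodK_walkK_eq_sum hdeg, pairW, Set.indicator_apply]

end Indicator

section Connected

variable {α : Type*} [Fintype α] {m : α → α → ℝ}

lemma degOn_univ_pos_of_connected [Nontrivial α] (hsymm : ∀ u v, m u v = m v u)
    (hnonneg : ∀ u v, 0 ≤ m u v)
    (hconn : (SimpleGraph.fromRel fun u v => m u v ≠ 0).Connected) (v : α) :
    0 < degOn m univ v := by
  obtain ⟨u, hadj⟩ := hconn.preconnected.exists_adj_of_nontrivial v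
  have hvu : m v u ≠ 0 := by
    simpa only [hsymm u v, or_self] using ((SimpleGraph.fromRel_adj _ v u).1 hadj).2
  exact sum_pos' (fun w _ => hnonneg v w) ⟨u, mem_univ u, (hnonneg v u).lt_of_ne' hvu⟩

end Connected

theorem stmt10_general {α : Type*} [Fintype α] {m : α → α → ℝ}
    (hsymm : ∀ u v, m u v = m v u) (hdeg : ∀ v, degOn m univ v ≠ 0)
    (htotal : vertOn m univ univ ≠ 0) {lam : ℝ}
    (hspec : ∀ φ : α → ℝ, iprodK m φ 1 = 0 → iprodK m (walkK m φ) φ ≤ lam * iprodK m φ φ)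
    (U : Finset α) :
    pairW m U U ≤
      vertOn m univ U * (lam + (1 - lam) * (vertOn m univ U / vertOn m univ univ)) := by
  have hindicator := iprodK_walkK_self_le hsymm hdeg (iprodK_one_one.trans_ne htotal) hspec
    ((U : Set α).indicator 1)
  rw [iprodK_walkK_indicator hdeg, iprodK_indicator_self, iprodK_indicator_one,
    iprodK_one_one] at hindicator
  exact hindicator.trans_eq (by ring)

/-- Theorem 4.4(2), Alon–Chung lemma for weighted graphs: if
`⟨Mφ,φ⟩ ≤ λ‖φ‖²` for every `φ` orthogonal to the constants, then for every nonempty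
proper `U ⊊ V`, `m(U)·(λ + (1-λ)·m(U)/m(V)) ≥ m(U,U)`. -/
theorem stmt10 {α : Type*} [Fintype α] [DecidableEq α] (m : α → α → ℝ)
    (hsymm : ∀ u v : α, m u v = m v u) (hnonneg : ∀ u v : α, 0 ≤ m u v)
    (hdiag : ∀ v : α, m v v = 0)
    (hconn : (SimpleGraph.fromRel (fun u v => m u v ≠ 0)).Connected)
    (lam : ℝ)
    (hspec : ∀ φ : α → ℝ, iprodK m φ (fun _ => 1) = 0 →
      iprodK m (walkK m φ) φ ≤ lam * iprodK m φ φ)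
    (U : Finset α) (hU : U.Nonempty) (hUproper : U ≠ Finset.univ) :
    pairW m U U ≤
      vertOn m Finset.univ U *
        (lam + (1 - lam) * (vertOn m Finset.univ U / vertOn m Finset.univ Finset.univ)) := by
  have : Nontrivial α := not_subsingleton_iff_nontrivial.1 fun _ => hUproper hU.eq_univ
  have hdeg := degOn_univ_pos_of_connected hsymm hnonneg hconn
  have htotal : 0 < vertOn m univ univ := sum_pos (fun v _ => hdeg v) univ_nonempty
  exact stmt10_general hsymm (fun v => (hdeg v).ne') htotal.ne' hspec U
end
end

section
/- Let G = (V,E) be a finite weighted graph with weight function m and let 0 ≤ β < 1 be a constant. If for every vertex v ∈ V one has m(v) ≥ (max_{e'∈E} m(e'))·(1−β)·|V|, then h_G ≥ 1 − 2β, i.e. G is a 2β-expander. -/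
open Finset

noncomputable section
open scoped Classical

/-!
Put `c = (1 - β)|V|`. Every edge at `u` weighs at most `m(u) / c`, so summing over the ordered pairs
inside `U` gives `m(U, U) ≤ |U| m(U) / c`, hence `m(U, V∖U) ≥ (1 - |U| / c) m(U)`. Together with the
same bound for `V∖U` this yields `m(U, V∖U) m(V) ≥ (2 - |V| / c) m(U) m(V∖U)`, that is
`h ≥ 2 - |V| / c = (1 - 2β) / (1 - β)`, which is at least `1 - 2β` as long as `β ≤ 1/2`.
For larger `β` the claim is weaker than `h ≥ 0`.
-/

section CutWeights

variable {α : Type*} {m : α → α → ℝ} {vs U W : Finset α} {c : ℝ}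

theorem pairW_comm (hsymm : ∀ u ∈ U, ∀ w ∈ W, m u w = m w u) : pairW m U W = pairW m W U := by
  unfold pairW
  rw [sum_comm]
  exact sum_congr rfl fun w hw => sum_congr rfl fun u hu => hsymm u hu w hw

theorem pairW_nonneg (hnonneg : ∀ u ∈ U, ∀ w ∈ W, 0 ≤ m u w) : 0 ≤ pairW m U W :=
  sum_nonneg fun u hu => sum_nonneg fun w hw => hnonneg u hu w hw

theorem vertOn_add_vertOn_sdiff (hU : U ⊆ vs) :
    vertOn m vs U + vertOn m vs (vs \ U) = vertOn m vs vs := by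
  rw [add_comm]
  exact sum_sdiff hU

theorem pairW_self_add_pairW_sdiff (hU : U ⊆ vs) :
    pairW m U U + pairW m U (vs \ U) = vertOn m vs U := by
  unfold pairW vertOn degOn
  rw [← sum_add_distrib]
  refine sum_congr rfl fun u _ => ?_
  rw [add_comm]
  exact sum_sdiff hU

theorem pairW_self_mul_le (hdeg : ∀ u ∈ U, ∀ v ∈ U, m u v * c ≤ degOn m vs u) :
    pairW m U U * c ≤ #U * vertOn m vs U := by
  unfold pairW vertOn
  rw [sum_mul, mul_sum]
  refine sum_le_sum fun u hu => ?_
  rw [sum_mul, ← nsmul_eq_mul]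
  exact sum_le_card_nsmul U _ _ (hdeg u hu)

theorem sub_card_mul_vertOn_le (hU : U ⊆ vs)
    (hdeg : ∀ u ∈ U, ∀ v ∈ U, m u v * c ≤ degOn m vs u) :
    (c - #U) * vertOn m vs U ≤ c * pairW m U (vs \ U) := by
  have hinner := pairW_self_mul_le hdeg
  have hsplit := pairW_self_add_pairW_sdiff (m := m) hU
  calc (c - #U) * vertOn m vs U
      = c * vertOn m vs U - #U * vertOn m vs U := by ring
    _ ≤ c * vertOn m vs U - pairW m U U * c := by gcongr
    _ = c * pairW m U (vs \ U) := by rw [← hsplit]; ring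

theorem two_mul_sub_card_mul_vertOn_mul_vertOn_le (hU : U ⊆ vs)
    (hsymm : ∀ u ∈ vs, ∀ v ∈ vs, m u v = m v u)
    (hdeg_nonneg : ∀ v ∈ vs, 0 ≤ degOn m vs v)
    (hdeg : ∀ u ∈ vs, ∀ v ∈ vs, m u v * c ≤ degOn m vs u) :
    (2 * c - #vs) * (vertOn m vs U * vertOn m vs (vs \ U)) ≤
      c * (pairW m U (vs \ U) * vertOn m vs vs) := by
  have hW : vs \ U ⊆ vs := sdiff_subset
  have hcut_U : (c - #U) * vertOn m vs U ≤ c * pairW m U (vs \ U) :=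
    sub_card_mul_vertOn_le hU fun u hu v hv => hdeg u (hU hu) v (hU hv)
  have hcut_W : (c - #(vs \ U)) * vertOn m vs (vs \ U) ≤ c * pairW m U (vs \ U) := by
    have hcut := sub_card_mul_vertOn_le hW fun u hu v hv => hdeg u (hW hu) v (hW hv)
    rwa [Finset.sdiff_sdiff_eq_self hU,
      pairW_comm fun w hw u hu => hsymm w (hW hw) u (hU hu)] at hcut
  have hvert_U : 0 ≤ vertOn m vs U := sum_nonneg fun v hv => hdeg_nonneg v (hU hv)
  have hvert_W : 0 ≤ vertOn m vs (vs \ U) := sum_nonneg fun v hv => hdeg_nonneg v (hW hv)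
  have hcard : (#vs : ℝ) = #(vs \ U) + #U := mod_cast (card_sdiff_add_card_eq_card hU).symm
  calc (2 * c - #vs) * (vertOn m vs U * vertOn m vs (vs \ U))
      = (c - #U) * vertOn m vs U * vertOn m vs (vs \ U) +
          (c - #(vs \ U)) * vertOn m vs (vs \ U) * vertOn m vs U := by rw [hcard]; ring
    _ ≤ c * pairW m U (vs \ U) * vertOn m vs (vs \ U) +
          c * pairW m U (vs \ U) * vertOn m vs U := by gcongr
    _ = c * (pairW m U (vs \ U) * vertOn m vs vs) := by
        rw [← vertOn_add_vertOn_sdiff hU]; ring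

end CutWeights

section CheegerConstant

variable {α : Type*} {m : α → α → ℝ} {vs : Finset α}

-- A single vertex has no cut, and there `cheegerOn` takes the junk value `sInf ∅ = 0`.
theorem le_cheegerOn (hvs : vs.Nontrivial) {a : ℝ}
    (hcut : ∀ U ⊂ vs, U.Nonempty → a ≤
      pairW m U (vs \ U) * vertOn m vs vs / (vertOn m vs U * vertOn m vs (vs \ U))) :
    a ≤ cheegerOn m vs := by
  refine le_csInf ?_ ?_
  · obtain ⟨v, hv⟩ := hvs.nonempty
    exact ⟨_, {v}, singleton_subset_iff.2 hv, singleton_nonempty v, hvs.ne_singleton.symm, rfl⟩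
  · rintro _ ⟨U, hU, hU_nonempty, hU_ne, rfl⟩
    exact hcut U (hU.ssubset_of_ne hU_ne) hU_nonempty

theorem cheegerOn_nonneg (hnonneg : ∀ u ∈ vs, ∀ v ∈ vs, 0 ≤ m u v) : 0 ≤ cheegerOn m vs := by
  refine Real.sInf_nonneg ?_
  rintro _ ⟨U, hU, -, -, rfl⟩
  have hpair : ∀ {A B}, A ⊆ vs → B ⊆ vs → 0 ≤ pairW m A B := fun hA hB =>
    pairW_nonneg fun u hu v hv => hnonneg u (hA hu) v (hB hv)
  have hvert : ∀ {A}, A ⊆ vs → 0 ≤ vertOn m vs A := fun hA => hpair hA Subset.rfl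
  exact div_nonneg (mul_nonneg (hpair hU sdiff_subset) (hvert Subset.rfl))
    (mul_nonneg (hvert hU) (hvert sdiff_subset))

theorem two_sub_card_div_le_cheegerOn (hvs : vs.Nontrivial)
    (hsymm : ∀ u ∈ vs, ∀ v ∈ vs, m u v = m v u) (hpos : ∀ v ∈ vs, 0 < degOn m vs v)
    {c : ℝ} (hc : 0 < c) (hdeg : ∀ u ∈ vs, ∀ v ∈ vs, m u v * c ≤ degOn m vs u) :
    2 - #vs / c ≤ cheegerOn m vs := by
  refine le_cheegerOn hvs fun U hU hU_nonempty => ?_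
  have hvert_U : 0 < vertOn m vs U := sum_pos (fun v hv => hpos v (hU.subset hv)) hU_nonempty
  have hvert_W : 0 < vertOn m vs (vs \ U) :=
    sum_pos (fun v hv => hpos v (sdiff_subset hv)) (sdiff_nonempty.2 hU.not_subset)
  have hcut := two_mul_sub_card_mul_vertOn_mul_vertOn_le hU.subset hsymm
    (fun v hv => (hpos v hv).le) hdeg
  rw [le_div_iff₀ (mul_pos hvert_U hvert_W)]
  refine le_of_mul_le_mul_left ?_ hc
  rwa [← mul_assoc, mul_sub, mul_div_cancel₀ _ hc.ne', mul_comm c 2]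

theorem stmt11_general (hvs : vs.Nontrivial) (hsymm : ∀ u ∈ vs, ∀ v ∈ vs, m u v = m v u)
    (hnonneg : ∀ u ∈ vs, ∀ v ∈ vs, 0 ≤ m u v) (hpos : ∀ v ∈ vs, 0 < degOn m vs v)
    {β : ℝ} (hβ0 : 0 ≤ β) (hβ1 : β < 1)
    (hdeg : ∀ u ∈ vs, ∀ v ∈ vs, m u v * ((1 - β) * #vs) ≤ degOn m vs u) :
    1 - 2 * β ≤ cheegerOn m vs := by
  rcases le_total (1 - 2 * β) 0 with hβ_large | hβ_small
  · exact hβ_large.trans (cheegerOn_nonneg hnonneg)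
  · have hβ : 0 < 1 - β := sub_pos.2 hβ1
    have hn : (0 : ℝ) < #vs := mod_cast hvs.nonempty.card_pos
    calc 1 - 2 * β ≤ (1 - 2 * β) / (1 - β) := le_div_self hβ_small hβ (by linarith)
      _ = 2 - #vs / ((1 - β) * #vs) := by field_simp; ring
      _ ≤ cheegerOn m vs := two_sub_card_div_le_cheegerOn hvs hsymm hpos (mul_pos hβ hn) hdeg

end CheegerConstant

/-- Lemma 4.5, almost complete graphs: if every vertex satisfies
`m(v) ≥ (max_{e' ∈ E} m(e'))·(1-β)·|V|` (with `0 ≤ β < 1`), then `h_G ≥ 1 - 2β`,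
i.e. `G` is a `2β`-expander. -/
theorem stmt11 {α : Type*} [Fintype α] [DecidableEq α] (m : α → α → ℝ)
    (hsymm : ∀ u v : α, m u v = m v u) (hnonneg : ∀ u v : α, 0 ≤ m u v)
    (hdiag : ∀ v : α, m v v = 0)
    (hedge : ∃ u v : α, m u v ≠ 0)
    (β : ℝ) (hβ0 : 0 ≤ β) (hβ1 : β < 1)
    (hdeg : ∀ v u w : α, m u w * ((1 - β) * (Fintype.card α : ℝ)) ≤ degOn m Finset.univ v) :
    1 - 2 * β ≤ cheegerOn m Finset.univ := by
  obtain ⟨a, b, hab⟩ := hedge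
  have : Nontrivial α := ⟨a, b, fun h => hab (h ▸ hdiag a)⟩
  have hc : 0 < (1 - β) * (Fintype.card α : ℝ) :=
    mul_pos (sub_pos.2 hβ1) (mod_cast Fintype.card_pos_iff.2 ⟨a⟩)
  have hpos (v : α) : 0 < degOn m univ v :=
    (mul_pos ((hnonneg a b).lt_of_ne' hab) hc).trans_le (hdeg v a b)
  exact stmt11_general univ_nontrivial (fun u _ v _ => hsymm u v) (fun u _ v _ => hnonneg u v)
    (fun v _ => hpos v) hβ0 hβ1 fun u _ v _ => hdeg u u v
end
end

section
/- (Links lemma.) Let λ_loc ≥ 0 and let X be an (s,k,K)-two-layer system such that the link of every vertex is a λ_loc-expander. Let A ⊆ E be nonempty, 0 < μ < 1, and U ⊆ V_{μ-small} (with respect to A). For 0 ≤ i ≤ k set A_U^i = {τ ∈ A : |τ ∩ U| = i}. Then (s−1)·(λ_loc + μ)·Σ_{i=1}^{k} i·w(A_U^i) ≥ Σ_{v∈U} m_v(A_v, A_v). -/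
open Finset

noncomputable section
open scoped Classical

/-- An `(s,k,K)`-two-layer system `X = (V,E,T)`:  `E` is a set of `k`-element subsets of `V`
covering `V`; `T` is a set of `K`-element subsets of `E` covering `E`; and for every `σ ∈ T`
and every vertex `v ∈ σ` (meaning `v ∈ τ` for some `τ ∈ σ`), `2 ≤ |{τ ∈ σ : v ∈ τ}| ≤ s`.
A positive weight function `w` on `T` is part of the data. -/
structure TwoLayer (V : Type*) [Fintype V] [DecidableEq V] where
  s : ℕ
  k : ℕ
  K : ℕ
  E : Finset (Finset V)
  T : Finset (Finset (Finset V))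
  w0 : Finset (Finset V) → ℝ
  w0_pos : ∀ σ ∈ T, 0 < w0 σ
  card_of_mem_E : ∀ τ ∈ E, τ.card = k
  cover_V : ∀ v : V, ∃ τ ∈ E, v ∈ τ
  card_of_mem_T : ∀ σ ∈ T, σ.card = K
  sub_of_mem_T : ∀ σ ∈ T, ∀ τ ∈ σ, τ ∈ E
  cover_E : ∀ τ ∈ E, ∃ σ ∈ T, τ ∈ σ
  deg_lb : ∀ σ ∈ T, ∀ v : V, (∃ τ ∈ σ, v ∈ τ) → 2 ≤ (σ.filter (fun τ => v ∈ τ)).card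
  deg_ub : ∀ σ ∈ T, ∀ v : V, (∃ τ ∈ σ, v ∈ τ) → (σ.filter (fun τ => v ∈ τ)).card ≤ s

namespace TwoLayer

variable {V : Type*} [Fintype V] [DecidableEq V] (X : TwoLayer V)

/-- The induced weight `w(τ) = Σ_{σ ∈ T, τ ∈ σ} w(σ)` of `τ ∈ E`. -/
def wE (τ : Finset V) : ℝ := ∑ σ ∈ X.T.filter (fun σ => τ ∈ σ), X.w0 σ

/-- The induced weight `w(v) = Σ_{σ ∈ T, v ∈ σ} w(σ)` of a vertex `v ∈ V`. -/
def wV (v : V) : ℝ := ∑ σ ∈ X.T.filter (fun σ => ∃ τ ∈ σ, v ∈ τ), X.w0 σ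

/-- `w(A)` for `A ⊆ E`. -/
def wSet (A : Finset (Finset V)) : ℝ := ∑ τ ∈ A, X.wE τ

/-- `w(U)` for `U ⊆ V`. -/
def wVSet (U : Finset V) : ℝ := ∑ v ∈ U, X.wV v

/-- `w(S)` for `S ⊆ T`. -/
def wT (S : Finset (Finset (Finset V))) : ℝ := ∑ σ ∈ S, X.w0 σ

/-- The weight kernel of the ground graph:
`m_gr({u,v}) = Σ_{τ ∈ E, u,v ∈ τ} w(τ)` for `u ≠ v`. -/
def mGr (u v : V) : ℝ :=
  if u = v then 0 else ∑ τ ∈ X.E.filter (fun τ => u ∈ τ ∧ v ∈ τ), X.wE τ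

/-- `E_v = {τ ∈ E : v ∈ τ}`, the vertex set of the link of `v`. -/
def Ev (v : V) : Finset (Finset V) := X.E.filter (fun τ => v ∈ τ)

/-- The weight kernel of the link of `v`:
`m_v({τ,τ'}) = Σ_{σ ∈ T, τ,τ' ∈ σ} w(σ)` for `τ ≠ τ'` in `E_v`. -/
def mLk (v : V) (τ τ' : Finset V) : ℝ :=
  if τ ≠ τ' ∧ τ ∈ X.Ev v ∧ τ' ∈ X.Ev v then
    ∑ σ ∈ X.T.filter (fun σ => τ ∈ σ ∧ τ' ∈ σ), X.w0 σ
  else 0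

/-- `m_v(B)` for a set `B ⊆ E_v` of vertices of the link of `v`. -/
def mLkSet (v : V) (B : Finset (Finset V)) : ℝ := vertOn (X.mLk v) (X.Ev v) B

/-- `τ ↔ τ'` : `τ,τ' ∈ E` are disjoint and contained in a common `σ ∈ T`. -/
def nintAdj (τ τ' : Finset V) : Prop :=
  τ ∈ X.E ∧ τ' ∈ X.E ∧ τ ∩ τ' = ∅ ∧ ∃ σ ∈ X.T, τ ∈ σ ∧ τ' ∈ σ

/-- The weight kernel of the non-intersecting graph. -/
def mNint (τ τ' : Finset V) : ℝ :=
  if X.nintAdj τ τ' then ∑ σ ∈ X.T.filter (fun σ => τ ∈ σ ∧ τ' ∈ σ), X.w0 σ else 0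

/-- The set of vertices that are `δ`-large with respect to `A ⊆ E`, i.e. those with
`m_v(A_v)/m_v(E_v) ≥ δ`. -/
def VLarge (A : Finset (Finset V)) (δ : ℝ) : Finset V :=
  Finset.univ.filter (fun v => δ ≤ X.mLkSet v (A ∩ X.Ev v) / X.mLkSet v (X.Ev v))

/-- `|{τ' ∈ σ : τ ↔ τ'}|`. -/
def nintCount (τ : Finset V) (σ : Finset (Finset V)) : ℕ :=
  (σ.filter (fun τ' => X.nintAdj τ τ')).card

/-- The set of values `|{τ' ∈ σ : τ ↔ τ'}|` over `τ ∈ E` and `σ ∈ T` with `τ ∈ σ`. -/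
def QSet : Set ℕ := { n | ∃ τ ∈ X.E, ∃ σ ∈ X.T, τ ∈ σ ∧ n = X.nintCount τ σ }

/-- `Q_nint^max`. -/
def Qmax : ℕ := sSup X.QSet

/-- `Q_nint^min`. -/
def Qmin : ℕ := sInf X.QSet

/-- The regularity constant `R_nint = Q_nint^min / Q_nint^max`. -/
def Rnint : ℝ := (X.Qmin : ℝ) / (X.Qmax : ℝ)

end TwoLayer

/-!
In a `λ`-expander, the Cheeger bound for `B` turns into an expander-mixing bound: the fraction of
the weight of `B` that stays inside `B` is at most `λ + (1 - λ) ρ`, where `ρ = m(B) / m(vs)` is the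
density of `B`. Applied in the link of a `μ`-small vertex `v` it gives
`m_v(A_v, A_v) ≤ (λ + μ) m_v(A_v)`. Each `σ ∋ τ` contributes its weight to the degree of `τ` in the
link of `v` once for every other `τ' ∈ σ` through `v`, hence at most `s - 1` times, so
`m_v(A_v) ≤ (s - 1) w(A_v)`. Summing `w(A_v)` over `v ∈ U` counts each `τ ∈ A` exactly `|τ ∩ U|`
times.
-/

section WeightedGraph

variable {α : Type*} {m : α → α → ℝ} {vs B : Finset α} {lam μ : ℝ}

theorem pairW_nonneg_s14 (hm : ∀ a b, 0 ≤ m a b) (B C : Finset α) : 0 ≤ pairW m B C :=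
  sum_nonneg fun _ _ => sum_nonneg fun _ _ => hm _ _

theorem vertOn_nonneg (hm : ∀ a b, 0 ≤ m a b) (vs B : Finset α) : 0 ≤ vertOn m vs B :=
  pairW_nonneg_s14 hm B vs

theorem vertOn_sdiff_add_vertOn (m : α → α → ℝ) (hB : B ⊆ vs) :
    vertOn m vs (vs \ B) + vertOn m vs B = vertOn m vs vs :=
  sum_sdiff hB

theorem pairW_sdiff_add_pairW (m : α → α → ℝ) (B : Finset α) {C : Finset α} (hC : C ⊆ vs) :
    pairW m B (vs \ C) + pairW m B C = vertOn m vs B := by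
  simp only [pairW, vertOn, degOn, ← sum_add_distrib, sum_sdiff hC]

theorem cheegerOn_le (hm : ∀ a b, 0 ≤ m a b) (hB : B ⊆ vs) (hne : B.Nonempty) (hBvs : B ≠ vs) :
    cheegerOn m vs ≤
      pairW m B (vs \ B) * vertOn m vs vs / (vertOn m vs B * vertOn m vs (vs \ B)) := by
  refine csInf_le ⟨0, ?_⟩ ⟨B, hB, hne, hBvs, rfl⟩
  rintro _ ⟨C, -, -, -, rfl⟩
  exact div_nonneg (mul_nonneg (pairW_nonneg_s14 hm _ _) (vertOn_nonneg hm _ _))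
    (mul_nonneg (vertOn_nonneg hm _ _) (vertOn_nonneg hm _ _))

theorem cheegerOn_mul_le (hm : ∀ a b, 0 ≤ m a b) (hB : B ⊆ vs) :
    cheegerOn m vs * (vertOn m vs B * vertOn m vs (vs \ B)) ≤
      pairW m B (vs \ B) * vertOn m vs vs := by
  have cut_nonneg : 0 ≤ pairW m B (vs \ B) * vertOn m vs vs :=
    mul_nonneg (pairW_nonneg_s14 hm _ _) (vertOn_nonneg hm _ _)
  rcases (mul_nonneg (vertOn_nonneg hm vs B) (vertOn_nonneg hm vs (vs \ B))).eq_or_lt with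
    degenerate | hpos
  · rwa [← degenerate, mul_zero]
  · have hne : B.Nonempty := by
      rw [nonempty_iff_ne_empty]
      rintro rfl
      simp [vertOn] at hpos
    have hBvs : B ≠ vs := by
      rintro rfl
      simp [vertOn] at hpos
    exact (le_div_iff₀ hpos).1 (cheegerOn_le hm hB hne hBvs)

theorem IsExpanderOn.pairW_self_le (hexp : IsExpanderOn m vs lam) (hm : ∀ a b, 0 ≤ m a b)
    (hB : B ⊆ vs) :
    pairW m B B ≤ (lam + (1 - lam) * (vertOn m vs B / vertOn m vs vs)) * vertOn m vs B := by
  have hvert := vertOn_sdiff_add_vertOn m hB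
  have hpair := pairW_sdiff_add_pairW m B hB
  have hinner : pairW m B B ≤ vertOn m vs B := by linarith [pairW_nonneg_s14 hm B (vs \ B)]
  have hBvs : vertOn m vs B ≤ vertOn m vs vs := by linarith [vertOn_nonneg hm vs (vs \ B)]
  rcases (vertOn_nonneg hm vs vs).eq_or_lt with total_zero | total_pos
  · have : vertOn m vs B = 0 := le_antisymm (total_zero ▸ hBvs) (vertOn_nonneg hm vs B)
    simpa [this] using hinner
  have hcut : (1 - lam) * (vertOn m vs B * vertOn m vs (vs \ B)) ≤
      pairW m B (vs \ B) * vertOn m vs vs :=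
    (mul_le_mul_of_nonneg_right (sub_le_comm.1 hexp)
      (mul_nonneg (vertOn_nonneg hm _ _) (vertOn_nonneg hm _ _))).trans (cheegerOn_mul_le hm hB)
  refine le_of_mul_le_mul_right ?_ total_pos
  calc pairW m B B * vertOn m vs vs
      = vertOn m vs B * vertOn m vs vs - pairW m B (vs \ B) * vertOn m vs vs := by
        rw [← hpair]; ring
    _ ≤ vertOn m vs B * vertOn m vs vs -
          (1 - lam) * (vertOn m vs B * vertOn m vs (vs \ B)) := by gcongr
    _ = (lam + (1 - lam) * (vertOn m vs B / vertOn m vs vs)) * vertOn m vs B *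
          vertOn m vs vs := by
        rw [eq_sub_of_add_eq hvert]; field_simp; ring

theorem IsExpanderOn.pairW_self_le_of_div_le (hexp : IsExpanderOn m vs lam)
    (hm : ∀ a b, 0 ≤ m a b) (hlam : 0 ≤ lam) (hB : B ⊆ vs)
    (hsmall : vertOn m vs B / vertOn m vs vs ≤ μ) :
    pairW m B B ≤ (lam + μ) * vertOn m vs B := by
  have density_nonneg : 0 ≤ vertOn m vs B / vertOn m vs vs :=
    div_nonneg (vertOn_nonneg hm _ _) (vertOn_nonneg hm _ _)
  refine (hexp.pairW_self_le hm hB).trans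
    (mul_le_mul_of_nonneg_right ?_ (vertOn_nonneg hm vs B))
  linarith [mul_nonneg hlam density_nonneg]

end WeightedGraph

theorem sum_Icc_one_mul_sum_fiber {α R : Type*} [NonAssocSemiring R] {A : Finset α} {g : α → ℕ}
    {k : ℕ} (hg : ∀ a ∈ A, g a ≤ k) (f : α → R) :
    ∑ i ∈ Icc 1 k, (i : R) * ∑ a ∈ A with g a = i, f a = ∑ a ∈ A, (g a : R) * f a := by
  calc ∑ i ∈ Icc 1 k, (i : R) * ∑ a ∈ A with g a = i, f a
      = ∑ i ∈ Icc 0 k, (i : R) * ∑ a ∈ A with g a = i, f a := by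
        refine sum_subset (Icc_subset_Icc_left zero_le_one) fun i hi hi' => ?_
        obtain rfl : i = 0 := by simp only [mem_Icc] at hi hi'; omega
        rw [Nat.cast_zero, zero_mul]
    _ = ∑ i ∈ Icc 0 k, ∑ a ∈ A with g a = i, (g a : R) * f a := by
        refine sum_congr rfl fun i _ => ?_
        rw [mul_sum]
        exact sum_congr rfl fun a ha => by rw [(mem_filter.1 ha).2]
    _ = ∑ a ∈ A, (g a : R) * f a :=
        sum_fiberwise_of_maps_to (fun a ha => mem_Icc.2 ⟨Nat.zero_le _, hg a ha⟩) _

theorem sum_sum_filter_mem {V R : Type*} [DecidableEq V] [NonAssocSemiring R]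
    (A : Finset (Finset V)) (U : Finset V) (f : Finset V → R) :
    ∑ v ∈ U, ∑ τ ∈ A with v ∈ τ, f τ = ∑ τ ∈ A, ((τ ∩ U).card : R) * f τ := by
  rw [sum_comm' (t' := A) (s' := fun τ => τ ∩ U)
    (by simp only [mem_filter, mem_inter]; tauto)]
  simp only [sum_const, nsmul_eq_mul]

namespace TwoLayer

variable {V : Type*} [Fintype V] [DecidableEq V] (X : TwoLayer V)

theorem inter_Ev {A : Finset (Finset V)} (hA : A ⊆ X.E) (v : V) :
    A ∩ X.Ev v = A.filter (fun τ => v ∈ τ) := by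
  rw [Ev, inter_filter, inter_eq_left.2 hA]

theorem mLk_nonneg (v : V) (τ τ' : Finset V) : 0 ≤ X.mLk v τ τ' := by
  unfold mLk
  split_ifs
  · exact sum_nonneg fun σ hσ => (X.w0_pos σ (mem_filter.1 hσ).1).le
  · exact le_rfl

theorem degOn_mLk {v : V} {τ : Finset V} (hτ : τ ∈ X.Ev v) :
    degOn (X.mLk v) (X.Ev v) τ =
      ∑ σ ∈ X.T with τ ∈ σ, (((σ.filter (fun τ' => v ∈ τ')).card : ℝ) - 1) * X.w0 σ := by
  have hvτ : v ∈ τ := (mem_filter.1 hτ).2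
  calc degOn (X.mLk v) (X.Ev v) τ
      = ∑ τ' ∈ (X.Ev v).erase τ, X.mLk v τ τ' :=
        (sum_erase _ (by simp [mLk])).symm
    _ = ∑ τ' ∈ (X.Ev v).erase τ, ∑ σ ∈ X.T with τ ∈ σ ∧ τ' ∈ σ, X.w0 σ :=
        sum_congr rfl fun τ' hτ' =>
          if_pos ⟨(ne_of_mem_erase hτ').symm, hτ, mem_of_mem_erase hτ'⟩
    _ = ∑ σ ∈ X.T with τ ∈ σ, ∑ _τ' ∈ (σ.filter (fun τ' => v ∈ τ')).erase τ, X.w0 σ := by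
        refine sum_comm' fun τ' σ => ?_
        have := X.sub_of_mem_T σ
        simp only [Ev, mem_erase, mem_filter]
        grind
    _ = ∑ σ ∈ X.T with τ ∈ σ, (((σ.filter (fun τ' => v ∈ τ')).card : ℝ) - 1) * X.w0 σ := by
        refine sum_congr rfl fun σ hσ => ?_
        have hmem : τ ∈ σ.filter (fun τ' => v ∈ τ') := mem_filter.2 ⟨(mem_filter.1 hσ).2, hvτ⟩
        rw [sum_const, nsmul_eq_mul, cast_card_erase_of_mem hmem]

theorem degOn_mLk_le {v : V} {τ : Finset V} (hτ : τ ∈ X.Ev v) :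
    degOn (X.mLk v) (X.Ev v) τ ≤ ((X.s : ℝ) - 1) * X.wE τ := by
  rw [X.degOn_mLk hτ, wE, mul_sum]
  refine sum_le_sum fun σ hσ => ?_
  obtain ⟨hσT, hτσ⟩ := mem_filter.1 hσ
  have hcard : (σ.filter (fun τ' => v ∈ τ')).card ≤ X.s :=
    X.deg_ub σ hσT v ⟨τ, hτσ, (mem_filter.1 hτ).2⟩
  have hw : 0 ≤ X.w0 σ := (X.w0_pos σ hσT).le
  gcongr

theorem mLkSet_le {v : V} {B : Finset (Finset V)} (hB : B ⊆ X.Ev v) :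
    X.mLkSet v B ≤ ((X.s : ℝ) - 1) * X.wSet B := by
  rw [wSet, mul_sum]
  exact sum_le_sum fun τ hτ => X.degOn_mLk_le (hB hτ)

theorem sum_wSet_inter_Ev {A : Finset (Finset V)} (hA : A ⊆ X.E) (U : Finset V) :
    ∑ v ∈ U, X.wSet (A ∩ X.Ev v) =
      ∑ i ∈ Icc 1 X.k, (i : ℝ) * X.wSet (A.filter (fun τ => (τ ∩ U).card = i)) := by
  have hcard : ∀ τ ∈ A, (τ ∩ U).card ≤ X.k := fun τ hτ =>
    X.card_of_mem_E τ (hA hτ) ▸ card_le_card inter_subset_left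
  simp only [X.inter_Ev hA, wSet]
  rw [sum_sum_filter_mem, sum_Icc_one_mul_sum_fiber hcard]

theorem mLkSet_div_lt_of_notMem_VLarge {A : Finset (Finset V)} {δ : ℝ} {v : V}
    (hv : v ∉ X.VLarge A δ) : X.mLkSet v (A ∩ X.Ev v) / X.mLkSet v (X.Ev v) < δ := by
  simpa [VLarge] using hv

end TwoLayer

/-- Lemma 4.10, links lemma. -/
theorem stmt14 {V : Type*} [Fintype V] [DecidableEq V] (X : TwoLayer V)
    (lamloc : ℝ) (hlamloc : 0 ≤ lamloc)
    (hexp : ∀ v : V, IsExpanderOn (X.mLk v) (X.Ev v) lamloc)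
    (A : Finset (Finset V)) (hAE : A ⊆ X.E) (hA : A.Nonempty)
    (μ : ℝ) (hμ0 : 0 < μ) (hμ1 : μ < 1)
    (U : Finset V) (hU : ∀ v ∈ U, v ∉ X.VLarge A μ) :
    ∑ v ∈ U, pairW (X.mLk v) (A ∩ X.Ev v) (A ∩ X.Ev v)
      ≤ ((X.s : ℝ) - 1) * (lamloc + μ) *
          ∑ i ∈ Finset.Icc 1 X.k,
            (i : ℝ) * X.wSet (A.filter (fun τ => (τ ∩ U).card = i)) := by
  calc ∑ v ∈ U, pairW (X.mLk v) (A ∩ X.Ev v) (A ∩ X.Ev v)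
      ≤ ∑ v ∈ U, (lamloc + μ) * X.mLkSet v (A ∩ X.Ev v) :=
        sum_le_sum fun v hv => (hexp v).pairW_self_le_of_div_le (X.mLk_nonneg v) hlamloc
          inter_subset_right (X.mLkSet_div_lt_of_notMem_VLarge (hU v hv)).le
    _ ≤ ∑ v ∈ U, (lamloc + μ) * (((X.s : ℝ) - 1) * X.wSet (A ∩ X.Ev v)) := by
        gcongr with v
        exact X.mLkSet_le inter_subset_right
    _ = ((X.s : ℝ) - 1) * (lamloc + μ) * ∑ v ∈ U, X.wSet (A ∩ X.Ev v) := by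
        rw [mul_sum]
        exact sum_congr rfl fun v _ => by ring
    _ = _ := by rw [X.sum_wSet_inter_Ev hAE]
end
end
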